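/- The equation Y² = 3³·5·X⁵ − 5 (that is, Y² = 135X⁵ − 5) has no rational solutions (X, Y) ∈ ℚ × ℚ. -/

import Mathlib

/-!
Put `x = 3X`, `y = 3Y`, so that `y² = 5x⁵ - 45`, and write `x = a / b` in lowest terms. Then
`5b(a⁵ - 9b⁵)` is a square with `b` and `a⁵ - 9b⁵` coprime. Either `b = w²` and
`a⁵ = 9w¹⁰ + 5t²`, which is impossible modulo 25, or `b = 5w²` and `a⁵ = t² + 5(75w⁵)²`.

In the second case suppose first that `3 ∣ a`. Removing the factor `9` leaves an element of
`ℤ[√-5]` of norm `27N⁵`; its product with `2 + √-5` or with the conjugate is a fifth power, whose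
`√-5`-coordinate is divisible by `5`, and this contradicts coprimality. If `3 ∤ a`, then
`t + 75w⁵√-5` is itself a fifth power, and Dirichlet's descent for Fermat's last theorem with
exponent 5 applies: the `√d`-coordinate of `(c + e√d)⁵` with `d = ±5` is `5eQ`, where
`Q = (c² + de²)² - 5(2e²)²` is coprime to `30e`. Hence `Q` is again a fifth power, and the element
`(c² + de²) + 2e²√5` of `ℤ[√5]` has the same shape with a smaller `√5`-coordinate.

Neither ring is a principal ideal domain. To see that `α` with coprime coordinates and norm `Mⁿ`
is an `n`-th power, take by Thue's lemma a small `β` in the ideal `(α, M)`: then `α ∣ βⁿ`, and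
the norm of the quotient is the `n`-th power of the small integer `N(β) / M`.
-/

open Zsqrtd

/-! ### Small elements of the ideal `(α, M)` -/

theorem exists_abs_le_intCast_eq_mul (m A B : ℕ) [NeZero m] (hm : m < (A + 1) * (B + 1))
    (t : ZMod m) :
    ∃ u v : ℤ, (u ≠ 0 ∨ v ≠ 0) ∧ |u| ≤ A ∧ |v| ≤ B ∧ (u : ZMod m) = t * v := by
  let f : Fin (A + 1) × Fin (B + 1) → ZMod m := fun p ↦ (p.1 : ℕ) - t * (p.2 : ℕ)
  have card_lt : Fintype.card (ZMod m) < Fintype.card (Fin (A + 1) × Fin (B + 1)) := by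
    simpa [ZMod.card] using hm
  obtain ⟨p, q, hpq, hf⟩ := Fintype.exists_ne_map_eq_of_card_lt f card_lt
  have hp₁ := p.1.isLt
  have hp₂ := p.2.isLt
  have hq₁ := q.1.isLt
  have hq₂ := q.2.isLt
  refine ⟨(p.1 : ℕ) - (q.1 : ℕ), (p.2 : ℕ) - (q.2 : ℕ), ?_, ?_, ?_, ?_⟩
  · contrapose! hpq
    ext <;> omega
  · rw [abs_le]; omega
  · rw [abs_le]; omega
  · simp only [f] at hf
    push_cast
    linear_combination hf

theorem exists_box_side_lengths (m : ℕ) (hm : 0 < m) :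
    ∃ A B : ℕ, A ^ 2 < 2 * m ∧ 2 * B ^ 2 ≤ m ∧ m < (A + 1) * (B + 1) := by
  obtain ⟨B, hB, hB'⟩ : ∃ B : ℕ, 2 * B ^ 2 ≤ m ∧ m < 2 * (B + 1) ^ 2 := by
    have h_le : (m / 2).sqrt ^ 2 ≤ m / 2 := Nat.sqrt_le' _
    have h_lt : m / 2 < ((m / 2).sqrt + 1) ^ 2 := Nat.lt_succ_sqrt' _
    exact ⟨(m / 2).sqrt, by omega, by omega⟩
  have hA : m / (B + 1) * (B + 1) ≤ m := Nat.div_mul_le_self _ _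
  refine ⟨m / (B + 1), B, ?_, hB, ?_⟩
  · nlinarith [Nat.pow_le_pow_left hA 2]
  · rw [mul_comm]
    exact Nat.lt_mul_div_succ m (Nat.succ_pos B)

section CommRing

variable {R : Type*} [CommRing R] {α β m : R} {n : ℕ}

theorem dvd_pow_of_mem_span_pair (hα : α ∣ m ^ n) (hβ : β ∈ Ideal.span {α, m}) : α ∣ β ^ n := by
  obtain ⟨z, δ, rfl⟩ := Ideal.mem_span_pair.1 hβ
  have sub_dvd : α ∣ (z * α + δ * m) ^ n - (δ * m) ^ n :=
    (Dvd.intro_left z (by ring)).trans (sub_dvd_pow_sub_pow (z * α + δ * m) (δ * m) n)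
  rw [mul_pow δ] at sub_dvd
  exact (dvd_sub_left (hα.mul_left _)).1 sub_dvd

end CommRing

section Zsqrtd

variable {d : ℤ} {α β : ℤ√d} {M : ℤ} {n : ℕ}

theorem zsqrtd_norm_pow (α : ℤ√d) (n : ℕ) : (α ^ n).norm = α.norm ^ n :=
  map_pow normMonoidHom α n

theorem dvd_norm_of_mem_span_pair (hα : M ∣ α.norm) (hβ : β ∈ Ideal.span {α, (M : ℤ√d)}) :
    M ∣ β.norm := by
  obtain ⟨z, δ, rfl⟩ := Ideal.mem_span_pair.1 hβ
  obtain ⟨k, hk⟩ := hα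
  have hk' : α * star α = M * k := by rw [← norm_eq_mul_conj, hk, Int.cast_mul]
  rw [← intCast_dvd_intCast (d := d), norm_eq_mul_conj]
  refine ⟨z * star z * k + z * α * star δ + δ * star z * star α + M * δ * star δ, ?_⟩
  simp only [star_add, star_mul, star_intCast]
  linear_combination z * star z * hk'

theorem exists_small_mem_span_pair (hM : M ≠ 0) (hα : IsCoprime α.im M) :
    ∃ β ∈ Ideal.span {α, (M : ℤ√d)}, β ≠ 0 ∧ β.re ^ 2 < 2 * |M| ∧ 2 * β.im ^ 2 ≤ |M| := by
  have : NeZero M.natAbs := ⟨Int.natAbs_ne_zero.2 hM⟩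
  obtain ⟨A, B, hA, hB, hAB⟩ := exists_box_side_lengths M.natAbs (Int.natAbs_pos.2 hM)
  obtain ⟨y, k, hy⟩ := hα
  obtain ⟨u, v, huv, hu, hv, hcong⟩ :=
    exists_abs_le_intCast_eq_mul M.natAbs A B hAB (α.re * y : ℤ)
  obtain ⟨l, hl⟩ : M ∣ u - α.re * y * v := by
    rw [← Int.natAbs_dvd, ← ZMod.intCast_zmod_eq_zero_iff_dvd]
    push_cast at hcong ⊢
    rw [hcong, sub_self]
  refine ⟨⟨u, v⟩, Ideal.mem_span_pair.2 ⟨(v * y : ℤ), ⟨l, k * v⟩, ?_⟩, ?_, ?_, ?_⟩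
  · ext
    · simp only [re_add, re_mul, re_intCast, im_intCast]
      linear_combination -hl
    · simp only [im_add, im_mul, re_intCast, im_intCast]
      linear_combination v * hy
  · simpa [Zsqrtd.ext_iff, imp_iff_not_or] using huv
  · rw [Int.abs_eq_natAbs]
    have : u ^ 2 ≤ (A : ℤ) ^ 2 := sq_le_sq.2 (by simpa using hu)
    have : (A : ℤ) ^ 2 < 2 * M.natAbs := mod_cast hA
    simp only
    omega
  · rw [Int.abs_eq_natAbs]
    have : v ^ 2 ≤ (B : ℤ) ^ 2 := sq_le_sq.2 (by simpa using hv)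
    have : 2 * (B : ℤ) ^ 2 ≤ M.natAbs := mod_cast hB
    simp only
    omega

theorem isCoprime_im_of_norm_eq_pow (hα : IsCoprime α.re α.im) (hn : n ≠ 0)
    (hnorm : α.norm = M ^ n) : IsCoprime α.im M := by
  have : IsCoprime α.im (α.re ^ 2 + α.im * (-d * α.im)) := hα.symm.pow_right.add_mul_left_right _
  rw [show α.re ^ 2 + α.im * (-d * α.im) = M ^ n by rw [← hnorm, norm_def]; ring] at this
  exact (IsCoprime.pow_right_iff (Nat.pos_of_ne_zero hn)).1 this

theorem exists_pow_eq_mul_of_mem_span_pair (hM : M ≠ 0) (hα : α.norm = M ^ n)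
    (hβ : β ∈ Ideal.span {α, (M : ℤ√d)}) {k : ℤ} (hk : β.norm = M * k) :
    ∃ η : ℤ√d, β ^ n = α * η ∧ η.norm = k ^ n := by
  have hα_dvd : α ∣ (M : ℤ√d) ^ n :=
    ⟨star α, by rw [← norm_eq_mul_conj, hα, Int.cast_pow]⟩
  obtain ⟨η, hη⟩ := dvd_pow_of_mem_span_pair hα_dvd hβ
  refine ⟨η, hη, mul_left_cancel₀ (pow_ne_zero n hM) ?_⟩
  rw [← hα, ← Zsqrtd.norm_mul, ← hη, zsqrtd_norm_pow, hk, mul_pow, hα]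

theorem eq_star_mul_of_eq_mul_of_norm_eq_one {γ ε : ℤ√d} (h : γ = α * ε) (hε : ε.norm = 1) :
    α = star ε * γ := by
  have : ε * star ε = 1 := by rw [← norm_eq_mul_conj, hε, Int.cast_one]
  rw [h]
  linear_combination -α * this

end Zsqrtd

/-! ### Powers in `ℤ[√-5]` -/

section Zsqrtd

variable {d : ℤ} {n : ℕ}

theorem isSquare_zmod_of_norm_eq_pow {p : ℕ} [Fact p.Prime] (hp : (p : ℤ) ∣ d) (hn : Odd n)
    {ξ : ℤ√d} {k : ℤ} (hξ : ξ.norm = k ^ n) : IsSquare (k : ZMod p) := by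
  rcases eq_or_ne (k : ZMod p) 0 with hk | hk
  · exact hk ▸ IsSquare.zero
  obtain ⟨m, rfl⟩ := hn
  have hd : (d : ZMod p) = 0 := (ZMod.intCast_zmod_eq_zero_iff_dvd d p).2 hp
  have hmod : (ξ.re : ZMod p) * ξ.re = (k : ZMod p) * (k ^ m) ^ 2 := by
    have := congrArg (Int.cast (R := ZMod p)) hξ
    rw [norm_def] at this
    push_cast at this
    linear_combination this + (ξ.im : ZMod p) ^ 2 * hd
  refine ⟨ξ.re / k ^ m, ?_⟩
  field_simp
  linear_combination -hmod

theorem two_dvd_of_four_dvd_norm (hd : (d : ZMod 4) = 3) {ξ : ℤ√d} (hξ : 4 ∣ ξ.norm) : 2 ∣ ξ := by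
  have key : ∀ x y : ZMod 4, x * x - 3 * y * y = 0 → 2 * x = 0 ∧ 2 * y = 0 := by decide
  have hmod : (ξ.re : ZMod 4) * ξ.re - 3 * ξ.im * ξ.im = 0 := by
    rw [← hd]
    exact_mod_cast (ZMod.intCast_zmod_eq_zero_iff_dvd ξ.norm 4).2 hξ
  obtain ⟨hre, him⟩ := key _ _ hmod
  have hre' : (4 : ℤ) ∣ 2 * ξ.re := (ZMod.intCast_zmod_eq_zero_iff_dvd _ 4).1 (mod_cast hre)
  have him' : (4 : ℤ) ∣ 2 * ξ.im := (ZMod.intCast_zmod_eq_zero_iff_dvd _ 4).1 (mod_cast him)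
  exact_mod_cast (intCast_dvd 2 ξ).2 ⟨by omega, by omega⟩

theorem two_pow_dvd_of_four_pow_dvd_norm (hd : (d : ZMod 4) = 3) {ξ : ℤ√d} (hξ : 4 ^ n ∣ ξ.norm) :
    2 ^ n ∣ ξ := by
  induction n generalizing ξ with
  | zero => simp
  | succ n ih =>
    obtain ⟨ζ, rfl⟩ := two_dvd_of_four_dvd_norm hd ((dvd_pow_self 4 n.succ_ne_zero).trans hξ)
    rw [Zsqrtd.norm_mul, show (2 : ℤ√d).norm = 4 from norm_natCast 2, pow_succ',
      mul_dvd_mul_iff_left four_ne_zero] at hξ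
    rw [pow_succ']
    exact mul_dvd_mul_left 2 (ih hξ)

theorem eq_one_or_neg_one_of_norm_eq_one (hd : d < -1) {ε : ℤ√d} (hε : ε.norm = 1) :
    ε = 1 ∨ ε = -1 := by
  rw [norm_def] at hε
  have him : ε.im = 0 := by
    by_contra him
    nlinarith [mul_self_nonneg ε.re, mul_self_pos.2 him]
  have hre : ε.re * ε.re = 1 := by simpa [him] using hε
  simpa [Zsqrtd.ext_iff, him] using mul_self_eq_one_iff.1 hre

theorem exists_pow_eq_mul_norm_one_of_four_dvd (hd : (d : ZMod 4) = 3) {α β η : ℤ√d}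
    (hβη : β ^ n = α * η) (hβ : 4 ∣ β.norm) (hη : η.norm = 4 ^ n) :
    ∃ γ ε : ℤ√d, γ ^ n = α * ε ∧ ε.norm = 1 := by
  obtain ⟨γ, rfl⟩ := two_dvd_of_four_dvd_norm hd hβ
  obtain ⟨ε, rfl⟩ := two_pow_dvd_of_four_pow_dvd_norm hd hη.symm.dvd
  have two_pow_norm : ((2 : ℤ√d) ^ n).norm = 4 ^ n := by
    rw [zsqrtd_norm_pow, show (2 : ℤ√d).norm = 4 from norm_natCast 2]
  have four_pow_ne_zero : (4 : ℤ) ^ n ≠ 0 := pow_ne_zero n four_ne_zero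
  refine ⟨γ, ε, ?_, ?_⟩
  · have : ((2 ^ n : ℤ) : ℤ√d) * γ ^ n = (2 ^ n : ℤ) * (α * ε) := by
      push_cast
      linear_combination hβη
    exact Zsqrtd.eq_of_smul_eq_smul_left (pow_ne_zero n two_ne_zero) this
  · rwa [Zsqrtd.norm_mul, two_pow_norm, mul_eq_left₀ four_pow_ne_zero] at hη

end Zsqrtd

theorem norm_pos_of_isCoprime {d : ℤ} (hd : d < 0) {α : ℤ√d} (hα : IsCoprime α.re α.im) :
    0 < α.norm := by
  refine (norm_nonneg hd.le α).lt_of_ne' fun h ↦ ?_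
  obtain rfl := (norm_eq_zero_iff hd α).1 h
  exact not_isCoprime_zero_zero hα

theorem exists_pow_eq_mul_norm_one_zsqrtd_neg_five {α : ℤ√(-5)} {N : ℤ} {n : ℕ} (hn : Odd n)
    (hα : IsCoprime α.re α.im) (hnorm : α.norm = N ^ n) :
    ∃ γ ε : ℤ√(-5), γ ^ n = α * ε ∧ ε.norm = 1 := by
  have hN : 0 < N := hn.pow_pos_iff.1 (hnorm ▸ norm_pos_of_isCoprime (by decide) hα)
  obtain ⟨β, hβ, hβ₀, hre, him⟩ := exists_small_mem_span_pair hN.ne'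
    (isCoprime_im_of_norm_eq_pow hα hn.pos.ne' hnorm)
  rw [abs_of_pos hN] at hre him
  obtain ⟨k, hk⟩ := dvd_norm_of_mem_span_pair (hnorm ▸ dvd_pow_self N hn.pos.ne') hβ
  have hk_pos : 0 < k := by
    have : 0 < β.norm :=
      (norm_nonneg (by decide) β).lt_of_ne' ((norm_eq_zero_iff (by decide) β).not.2 hβ₀)
    exact pos_of_mul_pos_right (hk ▸ this) hN.le
  have hk_lt : k < 5 := by
    rw [norm_def] at hk
    nlinarith
  obtain ⟨η, hβη, hη⟩ := exists_pow_eq_mul_of_mem_span_pair hN.ne' hnorm hβ hk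
  have hk_sq : IsSquare (k : ZMod 5) :=
    have : Fact (Nat.Prime 5) := ⟨by decide⟩
    isSquare_zmod_of_norm_eq_pow (by decide) hn hη
  have hk_eq : k = 1 ∨ k = 4 := by
    interval_cases k
    · exact .inl rfl
    · exact absurd hk_sq (by decide)
    · exact absurd hk_sq (by decide)
    · exact .inr rfl
  obtain rfl | rfl := hk_eq
  · exact ⟨β, η, hβη, by rw [hη, one_pow]⟩
  · exact exists_pow_eq_mul_norm_one_of_four_dvd (by decide) hβη (hk ▸ dvd_mul_left 4 N) hη

theorem exists_pow_eq_zsqrtd_neg_five {α : ℤ√(-5)} {N : ℤ} {n : ℕ} (hn : Odd n)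
    (hα : IsCoprime α.re α.im) (hnorm : α.norm = N ^ n) : ∃ γ : ℤ√(-5), γ ^ n = α := by
  obtain ⟨γ, ε, hγ, hε⟩ := exists_pow_eq_mul_norm_one_zsqrtd_neg_five hn hα hnorm
  obtain rfl | rfl := eq_one_or_neg_one_of_norm_eq_one (by decide) hε
  · exact ⟨γ, by rw [hγ, mul_one]⟩
  · exact ⟨-γ, by rw [hn.neg_pow, hγ, mul_neg_one, neg_neg]⟩

/-! ### Fifth powers in `ℤ[√5]` -/

/-- The map `x + y√d ↦ xy` from norm-one elements to `ZMod d`. It is multiplicative because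
`x² ≡ 1` modulo `d`, and it detects the units whose coefficient `y` is divisible by `d`. -/
def pellMulHom (d : ℕ) : Pell.Solution₁ (d : ℤ) →* Multiplicative (ZMod d) where
  toFun a := Multiplicative.ofAdd (a.x * a.y : ZMod d)
  map_one' := by simp
  map_mul' a b := by
    have sq_eq_one (c : Pell.Solution₁ (d : ℤ)) : (c.x : ZMod d) ^ 2 = 1 := by
      simpa using congrArg (Int.cast (R := ZMod d)) c.prop_x
    rw [← ofAdd_add, Pell.Solution₁.x_mul, Pell.Solution₁.y_mul]
    push_cast
    rw [ZMod.natCast_self]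
    congr 1
    linear_combination (b.x * b.y : ZMod d) * sq_eq_one a + (a.x * a.y : ZMod d) * sq_eq_one b

theorem isFundamental_nine_four :
    Pell.IsFundamental (Pell.Solution₁.mk 9 4 (by decide) : Pell.Solution₁ 5) := by
  refine ⟨by decide, by decide, fun {b} hb ↦ ?_⟩
  by_contra! hlt
  have hprop := b.prop
  rw [Pell.Solution₁.x_mk] at hlt
  have hy : -4 < b.y ∧ b.y < 4 := abs_lt.1 (abs_lt_of_sq_lt_sq (by nlinarith) (by decide))
  obtain ⟨hy₁, hy₂⟩ := hy
  generalize b.x = x, b.y = y at *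
  interval_cases y <;> interval_cases x <;> omega

theorem exists_pow_five_eq_solution {a : Pell.Solution₁ 5} (ha : 5 ∣ a.y) :
    ∃ b : Pell.Solution₁ 5, b ^ 5 = a := by
  set u : Pell.Solution₁ 5 := Pell.Solution₁.mk 9 4 (by decide)
  obtain ⟨m, hm⟩ : ∃ m : ℤ, a = u ^ m ∨ a = -u ^ m :=
    isFundamental_nine_four.eq_zpow_or_neg_zpow a
  have hy : 5 ∣ (u ^ m).y := by
    rcases hm with rfl | rfl
    · exact ha
    · simpa using ha
  have hom_zpow : pellMulHom 5 (u ^ m) = Multiplicative.ofAdd (m : ZMod 5) := by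
    rw [map_zpow]
    have : pellMulHom 5 u = Multiplicative.ofAdd 1 := by decide
    rw [this, ← ofAdd_zsmul]
    simp
  have hom_eq_zero : pellMulHom 5 (u ^ m) = Multiplicative.ofAdd 0 := by
    have := (ZMod.intCast_zmod_eq_zero_iff_dvd (u ^ m).y 5).2 hy
    exact congrArg Multiplicative.ofAdd (by rw [this, mul_zero])
  obtain ⟨j, rfl⟩ : (5 : ℤ) ∣ m := (ZMod.intCast_zmod_eq_zero_iff_dvd m 5).1
    (Multiplicative.ofAdd.injective (hom_zpow.symm.trans hom_eq_zero))
  have hpow : u ^ (5 * j) = (u ^ j) ^ 5 := by rw [mul_comm, zpow_mul]; rfl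
  rcases hm with rfl | rfl
  · exact ⟨u ^ j, hpow.symm⟩
  · exact ⟨-u ^ j, by rw [Odd.neg_pow (by decide), hpow]⟩

theorem exists_pow_five_eq_of_norm_eq_one {ε : ℤ√5} (hε : ε.norm = 1) (him : 5 ∣ ε.im) :
    ∃ γ : ℤ√5, γ ^ 5 = ε := by
  obtain ⟨b, hb⟩ := exists_pow_five_eq_solution (a := .mk ε.re ε.im (by
    rw [← hε, norm_def]; ring)) him
  exact ⟨b, congrArg (fun a : Pell.Solution₁ 5 ↦ (a : ℤ√5)) hb⟩

theorem two_dvd_of_eight_dvd_norm {d : ℤ} (hd : (d : ZMod 8) = 5) {ξ : ℤ√d} (hξ : 8 ∣ ξ.norm) :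
    2 ∣ ξ := by
  have key : ∀ x y : ZMod 8, x * x - 5 * y * y = 0 → 4 * x = 0 ∧ 4 * y = 0 := by decide
  have hmod : (ξ.re : ZMod 8) * ξ.re - 5 * ξ.im * ξ.im = 0 := by
    rw [← hd]
    exact_mod_cast (ZMod.intCast_zmod_eq_zero_iff_dvd ξ.norm 8).2 hξ
  obtain ⟨hre, him⟩ := key _ _ hmod
  have hre' : (8 : ℤ) ∣ 4 * ξ.re := (ZMod.intCast_zmod_eq_zero_iff_dvd _ 8).1 (mod_cast hre)
  have him' : (8 : ℤ) ∣ 4 * ξ.im := (ZMod.intCast_zmod_eq_zero_iff_dvd _ 8).1 (mod_cast him)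
  exact_mod_cast (intCast_dvd 2 ξ).2 ⟨by omega, by omega⟩

theorem not_intCast_dvd_of_isCoprime {d : ℤ} {α : ℤ√d} (hα : IsCoprime α.re α.im) {m : ℤ}
    (hm : ¬IsUnit m) : ¬(m : ℤ√d) ∣ α := fun h ↦
  hm (hα.isUnit_of_dvd' ((intCast_dvd m α).1 h).1 ((intCast_dvd m α).1 h).2)

theorem odd_of_norm_eq_pow {d : ℤ} (hd : (d : ZMod 8) = 5) {α : ℤ√d} (hα : IsCoprime α.re α.im)
    {M : ℤ} {n : ℕ} (hn : 3 ≤ n) (hnorm : α.norm = M ^ n) : Odd M := by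
  rw [← Int.not_even_iff_odd, even_iff_two_dvd]
  intro hM
  have h8 : 8 ∣ α.norm := hnorm ▸ (pow_dvd_pow_of_dvd hM 3).trans (pow_dvd_pow M hn)
  refine not_intCast_dvd_of_isCoprime hα (m := 2) (by decide) ?_
  exact_mod_cast two_dvd_of_eight_dvd_norm hd h8

theorem norm_ne_two_mul_odd {d : ℤ} (hd : (d : ZMod 4) = 1) (β : ℤ√d) {M : ℤ} (hM : Odd M) :
    β.norm ≠ 2 * M := by
  obtain ⟨j, rfl⟩ := hM
  intro h
  have key : ∀ x y j : ZMod 4, x * x - y * y ≠ 2 * (2 * j + 1) := by decide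
  apply key β.re β.im j
  simpa [norm_def, hd] using congrArg (Int.cast (R := ZMod 4)) h

theorem exists_mem_span_pair_norm_eq {α : ℤ√5} {M : ℤ} (hM : Odd M) (hα : IsCoprime α.im M)
    (hdvd : M ∣ α.norm) : ∃ β ∈ Ideal.span {α, (M : ℤ√5)}, β.norm = M := by
  have hM₀ : M ≠ 0 := by rintro rfl; exact absurd hM (by decide)
  obtain ⟨β, hβ, hβ₀, hre, him⟩ := exists_small_mem_span_pair hM₀ hα
  obtain ⟨k, hk⟩ := dvd_norm_of_mem_span_pair hdvd hβ
  have hk_ne : k ≠ 0 := by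
    rintro rfl
    have five_nonsquare : ¬IsSquare (5 : ℤ) := isFundamental_nine_four.d_nonsquare
    exact hβ₀ ((Zsqrtd.norm_eq_zero (fun n hn ↦ five_nonsquare ⟨n, hn⟩) β).1 (by rw [hk, mul_zero]))
  have hk_lt : |k| < 3 := by
    have hnorm : |β.norm| < 3 * |M| := by
      rw [norm_def, abs_lt]
      constructor <;> nlinarith [abs_pos.2 hM₀]
    rw [hk, abs_mul] at hnorm
    nlinarith [abs_pos.2 hM₀]
  have hk_ne_two : k ≠ 2 := by
    rintro rfl
    exact norm_ne_two_mul_odd (by decide) β hM (by rw [hk, mul_comm])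
  have hk_ne_neg_two : k ≠ -2 := by
    rintro rfl
    exact norm_ne_two_mul_odd (by decide) β hM.neg (by rw [hk]; ring)
  obtain rfl | rfl : k = 1 ∨ k = -1 := by
    rw [abs_lt] at hk_lt
    omega
  · exact ⟨β, hβ, by rw [hk, mul_one]⟩
  · refine ⟨⟨2, 1⟩ * β, Ideal.mul_mem_left _ _ hβ, ?_⟩
    rw [Zsqrtd.norm_mul, hk, norm_def]
    ring

/-- The cofactor of `5e` in the `√d`-coordinate of `(c + e√d)⁵`, simplified with `d² = 25`. -/
def imPowFiveCofactor (d c e : ℤ) : ℤ :=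
  c ^ 4 + 2 * d * c ^ 2 * e ^ 2 + 5 * e ^ 4

theorem prime_five_int : Prime (5 : ℤ) :=
  Nat.prime_iff_prime_int.1 Nat.prime_five

section PowFive

variable {d : ℤ}

theorem im_pow_five (hd : d ^ 2 = 25) (z : ℤ√d) :
    (z ^ 5).im = 5 * z.im * imPowFiveCofactor d z.re z.im := by
  simp only [imPowFiveCofactor, pow_succ, pow_zero, one_mul, im_mul, re_mul]
  linear_combination z.im ^ 5 * hd

theorem five_dvd_im_pow_five (hd : d ^ 2 = 25) (z : ℤ√d) : 5 ∣ (z ^ 5).im :=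
  ⟨_, (im_pow_five hd z).trans (mul_assoc _ _ _)⟩

theorem five_dvd_im_of_eq_mul_pow_five (hd : d ^ 2 = 25) {α ε γ : ℤ√d} (hα : α = ε * γ ^ 5)
    (hcop : IsCoprime α.re α.im) (him : 5 ∣ α.im) : 5 ∣ ε.im := by
  have hγ : 5 ∣ (γ ^ 5).im := five_dvd_im_pow_five hd γ
  have hmul : 5 ∣ ε.im * (γ ^ 5).re := by
    rw [hα, im_mul] at him
    exact (dvd_add_right (hγ.mul_left ε.re)).1 him
  refine (prime_five_int.dvd_mul.1 hmul).resolve_right fun hre ↦ ?_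
  refine not_intCast_dvd_of_isCoprime hcop (m := 5) (by decide) ?_
  exact hα ▸ ((intCast_dvd 5 (γ ^ 5)).2 ⟨hre, hγ⟩).mul_left ε

end PowFive

theorem exists_pow_five_eq_zsqrtd_five {α : ℤ√5} {M : ℤ} (hα : IsCoprime α.re α.im)
    (him : 5 ∣ α.im) (hnorm : α.norm = M ^ 5) : ∃ γ : ℤ√5, γ ^ 5 = α := by
  have hM : Odd M := odd_of_norm_eq_pow (by decide) hα (by decide) hnorm
  have hM₀ : M ≠ 0 := by rintro rfl; exact absurd hM (by decide)
  obtain ⟨β, hβ, hβ_norm⟩ := exists_mem_span_pair_norm_eq hM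
    (isCoprime_im_of_norm_eq_pow hα (by decide) hnorm) (hnorm ▸ dvd_pow_self M (by decide))
  obtain ⟨η, hβη, hη⟩ :=
    exists_pow_eq_mul_of_mem_span_pair hM₀ hnorm hβ (k := 1) (by rw [hβ_norm, mul_one])
  rw [one_pow] at hη
  have hα_eq : α = star η * β ^ 5 := eq_star_mul_of_eq_mul_of_norm_eq_one hβη hη
  obtain ⟨δ, hδ⟩ := exists_pow_five_eq_of_norm_eq_one ((norm_conj η).trans hη)
    (five_dvd_im_of_eq_mul_pow_five (by decide) hα_eq hα him)
  exact ⟨δ * β, by rw [mul_pow, hδ, hα_eq]⟩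

/-! ### The descent -/

theorem isCoprime_sq_add_mul_sq {c d e : ℤ} (hce : IsCoprime c e) (hd : Odd d)
    (hodd : Odd (c + e)) : IsCoprime (c ^ 2 + d * e ^ 2) (2 * e ^ 2) := by
  have hleft_odd : Odd (c ^ 2 + d * e ^ 2) := by
    simp only [Int.odd_add, Int.odd_pow, Int.even_mul, Int.even_pow] at hodd ⊢
    simpa [Int.not_even_iff_odd.2 hd] using hodd
  have two_coprime : IsCoprime (c ^ 2 + d * e ^ 2) 2 := Int.isCoprime_two_right.2 hleft_odd
  have sq_coprime : IsCoprime (c ^ 2 + d * e ^ 2) (e ^ 2) := hce.pow.add_mul_right_left d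
  exact two_coprime.mul_right sq_coprime

theorem odd_of_sq_eq_twentyFive {d : ℤ} (hd : d ^ 2 = 25) : Odd d :=
  (Int.odd_pow' two_ne_zero).1 (hd ▸ by decide)

theorem odd_re_add_im_of_isCoprime_pow {d : ℤ} (hd : Odd d) {z : ℤ√d} {n : ℕ} (hn : 2 ≤ n)
    (hcop : IsCoprime (z ^ n).re (z ^ n).im) : Odd (z.re + z.im) := by
  by_contra hodd
  have two_dvd_sq : ((2 : ℤ) : ℤ√d) ∣ z ^ 2 := by
    rw [intCast_dvd, sq, re_mul, im_mul, ← even_iff_two_dvd, ← even_iff_two_dvd]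
    rw [Int.not_odd_iff_even] at hodd
    have := Int.not_even_iff_odd.2 hd
    simp only [Int.even_add, Int.even_mul] at hodd ⊢
    tauto
  exact not_intCast_dvd_of_isCoprime hcop (by decide) (two_dvd_sq.trans (pow_dvd_pow z hn))

section PowFive

variable {d : ℤ}

theorem re_dvd_re_pow_five (z : ℤ√d) : z.re ∣ (z ^ 5).re := by
  refine ⟨z.re ^ 4 + 10 * d * z.re ^ 2 * z.im ^ 2 + 5 * d ^ 2 * z.im ^ 4, ?_⟩
  simp only [pow_succ, pow_zero, one_mul, im_mul, re_mul]
  ring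

theorem sq_sub_five_mul_sq_eq_imPowFiveCofactor (hd : d ^ 2 = 25) (c e : ℤ) :
    (c ^ 2 + d * e ^ 2) ^ 2 - 5 * (2 * e ^ 2) ^ 2 = imPowFiveCofactor d c e := by
  rw [imPowFiveCofactor]
  linear_combination e ^ 4 * hd

theorem isCoprime_three_imPowFiveCofactor (hd : d ^ 2 = 25) {c e : ℤ} (hce : IsCoprime c e) :
    IsCoprime 3 (imPowFiveCofactor d c e) := by
  rw [Int.prime_three.coprime_iff_not_dvd]
  intro h
  have key : ∀ d c e : ZMod 3, d ^ 2 = 25 → c ^ 4 + 2 * d * c ^ 2 * e ^ 2 + 5 * e ^ 4 = 0 →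
      c = 0 ∧ e = 0 := by decide
  have hmod := (ZMod.intCast_zmod_eq_zero_iff_dvd _ 3).2 h
  rw [imPowFiveCofactor] at hmod
  push_cast at hmod
  obtain ⟨hc, he⟩ := key d c e (mod_cast congrArg (Int.cast (R := ZMod 3)) hd) hmod
  exact Int.prime_three.not_isUnit (hce.isUnit_of_dvd'
    ((ZMod.intCast_zmod_eq_zero_iff_dvd c 3).1 hc) ((ZMod.intCast_zmod_eq_zero_iff_dvd e 3).1 he))

theorem isCoprime_thirty_mul_imPowFiveCofactor (hd : d ^ 2 = 25) {c e : ℤ} (hce : IsCoprime c e)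
    (hc : IsCoprime c 5) (hodd : Odd (c + e)) :
    IsCoprime (30 * e) (imPowFiveCofactor d c e) := by
  have coprime_e : IsCoprime e (imPowFiveCofactor d c e) := by
    rw [show imPowFiveCofactor d c e = c ^ 4 + e * (2 * d * c ^ 2 * e + 5 * e ^ 3) by
      rw [imPowFiveCofactor]; ring]
    exact hce.symm.pow_right.add_mul_left_right _
  have coprime_five : IsCoprime 5 (imPowFiveCofactor d c e) := by
    obtain ⟨k, rfl⟩ : 5 ∣ d := prime_five_int.dvd_of_dvd_pow ⟨5, hd⟩
    rw [show imPowFiveCofactor (5 * k) c e = c ^ 4 + 5 * (2 * k * c ^ 2 * e ^ 2 + e ^ 4) by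
      rw [imPowFiveCofactor]; ring]
    exact hc.symm.pow_right.add_mul_left_right _
  have coprime_two : IsCoprime 2 (imPowFiveCofactor d c e) := by
    rw [Int.isCoprime_two_left, imPowFiveCofactor]
    simp only [Int.odd_add, Int.even_mul, Int.even_pow, Int.odd_pow] at hodd ⊢
    simp_all [show ¬Even (5 : ℤ) by decide]
  exact ((coprime_two.mul_left (isCoprime_three_imPowFiveCofactor hd hce)).mul_left
    coprime_five).mul_left coprime_e

theorem isCoprime_thirty_mul_of_isCoprime_pow_five (hd : d ^ 2 = 25) {z : ℤ√d}
    (hcop : IsCoprime (z ^ 5).re (z ^ 5).im) :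
    IsCoprime (30 * z.im) (imPowFiveCofactor d z.re z.im) :=
  isCoprime_thirty_mul_imPowFiveCofactor hd
    (isCoprime_of_dvd_isCoprime hcop (dvd_pow_self z (by decide)))
    ((hcop.of_isCoprime_of_dvd_left (re_dvd_re_pow_five z)).of_isCoprime_of_dvd_right
      (five_dvd_im_pow_five hd z))
    (odd_re_add_im_of_isCoprime_pow (odd_of_sq_eq_twentyFive hd) (by decide) hcop)

end PowFive

/-- The invariant of the descent: `x + y√5` has coprime coordinates and its norm is a fifth power,
while `y` is `25` times a fifth power up to a factor `s` supported at the primes `2` and `3`. -/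
structure IsDescentPair (x y : ℤ) : Prop where
  isCoprime : IsCoprime x y
  exists_norm_eq : ∃ M, x ^ 2 - 5 * y ^ 2 = M ^ 5
  exists_mul_eq : ∃ (n : ℕ) (s D : ℤ), s ∣ 6 ^ n ∧ s * y = 25 * D ^ 5

theorem exists_pow_five_of_mul_im_pow_five {d : ℤ} (hd : d ^ 2 = 25) {z : ℤ√d}
    (hcop : IsCoprime (z ^ 5).re (z ^ 5).im) {s D : ℤ} {n : ℕ} (hs : s ∣ 6 ^ n)
    (hD : s * (z ^ 5).im = 25 * D ^ 5) :
    (∃ E, s * z.im = 5 * E ^ 5) ∧ ∃ M, imPowFiveCofactor d z.re z.im = M ^ 5 := by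
  set Q := imPowFiveCofactor d z.re z.im
  have coprime_thirty_mul : IsCoprime (30 * z.im) Q :=
    isCoprime_thirty_mul_of_isCoprime_pow_five hd hcop
  have coprime_im : IsCoprime z.im Q := coprime_thirty_mul.of_mul_left_right
  have coprime_five : IsCoprime (5 ^ 4) Q :=
    (coprime_thirty_mul.of_isCoprime_of_dvd_left ⟨6 * z.im, by ring⟩).pow_left
  have coprime_six : IsCoprime 6 Q :=
    coprime_thirty_mul.of_isCoprime_of_dvd_left ⟨5 * z.im, by ring⟩
  have coprime_s : IsCoprime s Q := coprime_six.pow_left.of_isCoprime_of_dvd_left hs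
  have mul_eq_pow : 5 ^ 4 * (s * z.im) * Q = (5 * D) ^ 5 := by
    rw [im_pow_five hd] at hD
    linear_combination 5 ^ 3 * hD
  obtain ⟨⟨E, hE⟩, hM⟩ := Int.eq_pow_of_mul_eq_pow_odd
    (coprime_five.mul_left (coprime_s.mul_left coprime_im)) (by decide) mul_eq_pow
  obtain ⟨E, rfl⟩ : 5 ∣ E :=
    prime_five_int.dvd_of_dvd_pow (n := 5) ⟨5 ^ 3 * (s * z.im), by rw [← hE]; ring⟩
  exact ⟨⟨E, by linarith⟩, hM⟩

theorem isDescentPair_of_mul_im_pow_five {d : ℤ} (hd : d ^ 2 = 25) {z : ℤ√d}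
    (hcop : IsCoprime (z ^ 5).re (z ^ 5).im) {s D : ℤ} {n : ℕ} (hs : s ∣ 6 ^ n)
    (hD : s * (z ^ 5).im = 25 * D ^ 5) :
    IsDescentPair (z.re ^ 2 + d * z.im ^ 2) (2 * z.im ^ 2) := by
  have hd_odd : Odd d := odd_of_sq_eq_twentyFive hd
  obtain ⟨⟨E, hE⟩, M, hM⟩ := exists_pow_five_of_mul_im_pow_five hd hcop hs hD
  refine ⟨?_, ⟨M, ?_⟩, 4 + n * 2, 2 ^ 4 * s ^ 2, 2 * E ^ 2, ?_, ?_⟩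
  · exact isCoprime_sq_add_mul_sq (isCoprime_of_dvd_isCoprime hcop (dvd_pow_self z (by decide)))
      hd_odd (odd_re_add_im_of_isCoprime_pow hd_odd (by decide) hcop)
  · rw [sq_sub_five_mul_sq_eq_imPowFiveCofactor hd, hM]
  · rw [pow_add, pow_mul]
    exact mul_dvd_mul (pow_dvd_pow_of_dvd (by decide) 4) (pow_dvd_pow_of_dvd hs 2)
  · linear_combination 32 * (s * z.im + 5 * E ^ 5) * hE

theorem IsDescentPair.five_dvd {x y : ℤ} (h : IsDescentPair x y) : 5 ∣ y := by
  obtain ⟨n, s, D, hs, hD⟩ := h.exists_mul_eq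
  have coprime_six : IsCoprime (6 : ℤ) 5 := ⟨1, -1, by decide⟩
  have coprime_s : IsCoprime s 5 := coprime_six.pow_left.of_isCoprime_of_dvd_left hs
  exact coprime_s.symm.dvd_of_dvd_mul_left ⟨5 * D ^ 5, by rw [hD]; ring⟩

theorem two_mul_sq_lt_abs_im_pow_five {z : ℤ√5} (hz : z.im ≠ 0) :
    2 * z.im ^ 2 < |(z ^ 5).im| := by
  have one_le : 1 ≤ |z.im| := Int.one_le_abs hz
  have cofactor_ge : |z.im| ≤ imPowFiveCofactor 5 z.re z.im := by
    have : |z.im| ≤ |z.im| ^ 4 := le_self_pow₀ one_le (by decide)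
    rw [Even.pow_abs (by decide)] at this
    rw [imPowFiveCofactor]
    nlinarith [sq_nonneg (z.re ^ 2), sq_nonneg (z.re * z.im), sq_nonneg (z.im ^ 2)]
  rw [im_pow_five (by decide), abs_mul, abs_mul, show |(5 : ℤ)| = 5 from rfl,
    abs_of_nonneg ((abs_nonneg z.im).trans cofactor_ge), ← sq_abs z.im]
  nlinarith

theorem IsDescentPair.exists_smaller {x y : ℤ} (h : IsDescentPair x y) (hy : y ≠ 0) :
    ∃ x' y' : ℤ, IsDescentPair x' y' ∧ y' ≠ 0 ∧ y'.natAbs < y.natAbs := by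
  obtain ⟨M, hM⟩ := h.exists_norm_eq
  obtain ⟨n, s, D, hs, hD⟩ := h.exists_mul_eq
  obtain ⟨z, hz⟩ := exists_pow_five_eq_zsqrtd_five (α := ⟨x, y⟩) h.isCoprime h.five_dvd
    (by rw [← hM, norm_def]; ring)
  obtain ⟨rfl, rfl⟩ : (z ^ 5).re = x ∧ (z ^ 5).im = y := by simp [hz]
  have him : z.im ≠ 0 := by
    rintro him
    exact hy (by rw [im_pow_five (by decide), him]; ring)
  refine ⟨_, _, isDescentPair_of_mul_im_pow_five (by decide) h.isCoprime hs hD, by positivity, ?_⟩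
  zify
  rw [abs_of_nonneg (by positivity)]
  exact two_mul_sq_lt_abs_im_pow_five him

theorem IsDescentPair.eq_zero {x y : ℤ} (h : IsDescentPair x y) : y = 0 := by
  induction hk : y.natAbs using Nat.strong_induction_on generalizing x y with
  | _ k ih =>
    by_contra hy
    obtain ⟨x', y', h', hy', hlt⟩ := h.exists_smaller hy
    exact hy' (ih _ (hk ▸ hlt) h' rfl)

/-! ### The curve -/

theorem isCoprime_of_isCoprime_sq_add_mul_sq {R : Type*} [CommRing R] {t y k : R}
    (h : IsCoprime (t ^ 2 + k * y ^ 2) y) : IsCoprime t y := by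
  rw [sq y, ← mul_assoc] at h
  exact (IsCoprime.pow_left_iff two_pos).1 h.of_add_mul_right_left

theorem isCoprime_two_mul_sub_add_two_mul {x y : ℤ} (hxy : IsCoprime x y) (h3 : ¬3 ∣ x + 2 * y) :
    IsCoprime (2 * x - 5 * y) (x + 2 * y) := by
  obtain ⟨p, q, hpq⟩ := hxy
  have coprime_nine : IsCoprime (3 ^ 2) (x + 2 * y) :=
    (Int.prime_three.coprime_iff_not_dvd.2 h3).pow_left
  have : (2 * x - 5 * y) * (2 * p - q) = 3 ^ 2 + (x + 2 * y) * -(5 * p + 2 * q) := by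
    linear_combination 9 * hpq
  exact (this ▸ coprime_nine.add_mul_left_left _ :
    IsCoprime ((2 * x - 5 * y) * (2 * p - q)) _).of_mul_left_left

-- Multiplying `x + y√-5` by `2 + √-5`, of norm `9`, turns the norm `27N⁵` into `(3N)⁵`.
theorem five_dvd_add_two_mul {x y N : ℤ} (hxy : IsCoprime x y) (h : x ^ 2 + 5 * y ^ 2 = 27 * N ^ 5)
    (h3 : ¬3 ∣ x + 2 * y) : 5 ∣ x + 2 * y := by
  obtain ⟨γ, hγ⟩ := exists_pow_eq_zsqrtd_neg_five (α := ⟨2 * x - 5 * y, x + 2 * y⟩) (N := 3 * N)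
    (n := 5) (by decide) (isCoprime_two_mul_sub_add_two_mul hxy h3)
    (by rw [norm_def]; linear_combination 9 * h)
  simpa [hγ] using five_dvd_im_pow_five (by decide) γ

theorem not_five_dvd_of_sq_add_five_mul_sq_eq {x y N : ℤ} (hxy : IsCoprime x y)
    (h : x ^ 2 + 5 * y ^ 2 = 27 * N ^ 5) : ¬5 ∣ y := by
  intro hy
  have five_not_dvd : ¬5 ∣ x := fun hx ↦ prime_five_int.not_isUnit (hxy.isUnit_of_dvd' hx hy)
  have three_dvd : 3 ∣ x + 2 * y := by
    by_contra h3
    have := five_dvd_add_two_mul hxy h h3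
    omega
  have three_dvd' : 3 ∣ -x + 2 * y := by
    by_contra h3
    have := five_dvd_add_two_mul hxy.neg_left (by rw [neg_sq, h]) h3
    omega
  exact Int.prime_three.not_isUnit (hxy.isUnit_of_dvd' (by omega) (by omega))

theorem three_not_dvd_of_pow_five_eq_sq_add {a t w : ℤ} (haw : IsCoprime a (5 * w))
    (h : a ^ 5 = t ^ 2 + 5 * (75 * w ^ 5) ^ 2) : ¬3 ∣ a := by
  rintro ⟨b, rfl⟩
  obtain ⟨u, rfl⟩ : 3 ∣ t := Int.prime_three.dvd_of_dvd_pow (n := 2)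
    ⟨81 * b ^ 5 - 5 * 25 * 75 * w ^ 10, by linear_combination -h⟩
  have norm_eq : u ^ 2 + 5 * (25 * w ^ 5) ^ 2 = 27 * b ^ 5 := by linarith
  have coprime_right : IsCoprime (27 * b ^ 5) (25 * w ^ 5) :=
    (haw.pow_left (m := 5)).pow_right (n := 5) |>.of_isCoprime_of_dvd_left ⟨9, by ring⟩
      |>.of_isCoprime_of_dvd_right ⟨125, by ring⟩
  exact not_five_dvd_of_sq_add_five_mul_sq_eq
    (isCoprime_of_isCoprime_sq_add_mul_sq (norm_eq ▸ coprime_right)) norm_eq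
    ⟨5 * w ^ 5, by ring⟩

theorem eq_zero_of_pow_five_eq_sq_add {a t w : ℤ} (haw : IsCoprime a (5 * w))
    (h : a ^ 5 = t ^ 2 + 5 * (75 * w ^ 5) ^ 2) : w = 0 := by
  have coprime_three : IsCoprime a 3 :=
    (Int.prime_three.coprime_iff_not_dvd.2 (three_not_dvd_of_pow_five_eq_sq_add haw h)).symm
  have coprime_right : IsCoprime (a ^ 5) (75 * w ^ 5) :=
    (coprime_three.mul_right haw).pow (m := 5) (n := 5) |>.of_isCoprime_of_dvd_right
      ⟨3 ^ 4 * 5 ^ 3, by ring⟩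
  have coprime_parts : IsCoprime t (75 * w ^ 5) :=
    isCoprime_of_isCoprime_sq_add_mul_sq (h ▸ coprime_right)
  obtain ⟨z, hz⟩ := exists_pow_eq_zsqrtd_neg_five (α := ⟨t, 75 * w ^ 5⟩) (n := 5) (by decide)
    coprime_parts (by rw [h, norm_def]; ring)
  have mul_im_eq : 3 ^ 4 * (z ^ 5).im = 25 * (3 * w) ^ 5 := by rw [hz]; ring
  have him : 2 * z.im ^ 2 = 0 := (isDescentPair_of_mul_im_pow_five (n := 4) (by decide)
    (by simpa [hz] using coprime_parts) (by decide) mul_im_eq).eq_zero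
  have hz_im : (z ^ 5).im = 0 := by
    rw [im_pow_five (by decide), show z.im = 0 by simpa using him]
    ring
  simpa [hz] using hz_im

theorem not_isCoprime_of_pow_five_eq_nine_mul_add_five_mul {a w t : ℤ}
    (h : a ^ 5 = 9 * w ^ 10 + 5 * t ^ 2) : ¬IsCoprime a w := by
  intro haw
  have key : ∀ a w t : ZMod 25, a ^ 5 = 9 * w ^ 10 + 5 * t ^ 2 → 5 * a = 0 ∧ 5 * w = 0 := by
    decide +kernel
  obtain ⟨ha, hw⟩ := key a w t (mod_cast congrArg (Int.cast (R := ZMod 25)) h)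
  have ha' : (25 : ℤ) ∣ 5 * a := (ZMod.intCast_zmod_eq_zero_iff_dvd _ 25).1 (mod_cast ha)
  have hw' : (25 : ℤ) ∣ 5 * w := (ZMod.intCast_zmod_eq_zero_iff_dvd _ 25).1 (mod_cast hw)
  exact prime_five_int.not_isUnit (haw.isUnit_of_dvd' (by omega) (by omega))

theorem exists_sq_of_isCoprime_of_mul_eq_sq {b c T : ℤ} (hb : 0 < b) (hbc : IsCoprime b c)
    (h : b * c = T ^ 2) : ∃ w t : ℤ, b = w ^ 2 ∧ c = t ^ 2 := by
  have hc : 0 ≤ c := nonneg_of_mul_nonneg_right (h ▸ sq_nonneg T) hb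
  obtain ⟨w, hw⟩ := Int.sq_of_isCoprime hbc h
  obtain ⟨t, ht⟩ := Int.sq_of_isCoprime hbc.symm (by rwa [mul_comm])
  exact ⟨w, t, hw.resolve_right (by nlinarith [sq_nonneg w]), by
    rcases ht with ht | ht <;> nlinarith [sq_nonneg t]⟩

theorem sq_ne_five_mul_mul_pow_five_sub {a b T : ℤ} (hb : 0 < b) (hab : IsCoprime a b) :
    T ^ 2 ≠ 5 * (b * (a ^ 5 - 9 * b ^ 5)) := by
  intro h
  obtain ⟨T, rfl⟩ : 5 ∣ T := prime_five_int.dvd_of_dvd_pow ⟨_, h⟩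
  have coprime_right : IsCoprime b (a ^ 5 - 9 * b ^ 5) := by
    rw [show a ^ 5 - 9 * b ^ 5 = a ^ 5 + b * (-9 * b ^ 4) by ring]
    exact hab.symm.pow_right.add_mul_left_right _
  have five_dvd : 5 ∣ b * (a ^ 5 - 9 * b ^ 5) := ⟨T ^ 2, by linarith⟩
  rcases prime_five_int.dvd_or_dvd five_dvd with ⟨b', rfl⟩ | ⟨c, hc⟩
  · obtain ⟨w, t, rfl, ht⟩ := exists_sq_of_isCoprime_of_mul_eq_sq (T := T) (by linarith)
      coprime_right.of_mul_left_right (by linarith)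
    have haw : IsCoprime a (5 * w) := (IsCoprime.pow_right_iff two_pos).1
      ((hab.pow_right (n := 2)).of_isCoprime_of_dvd_right ⟨w ^ 2, by ring⟩)
    have hw : w = 0 := eq_zero_of_pow_five_eq_sq_add haw (t := t) (by linarith)
    simp [hw] at hb
  · rw [hc] at h coprime_right
    obtain ⟨w, t, rfl, rfl⟩ := exists_sq_of_isCoprime_of_mul_eq_sq (T := T) hb
      coprime_right.of_mul_right_right (by linarith)
    exact not_isCoprime_of_pow_five_eq_nine_mul_add_five_mul (t := t) (by linarith)
      ((IsCoprime.pow_right_iff two_pos).1 hab)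

theorem sq_ne_five_mul_pow_five_sub_fortyFive (x y : ℚ) : y ^ 2 ≠ 5 * x ^ 5 - 45 := by
  intro h
  have hsq : IsSquare (((5 * (x.den * (x.num ^ 5 - 9 * x.den ^ 5)) : ℤ)) : ℚ) := by
    refine ⟨y * x.den ^ 3, ?_⟩
    push_cast
    rw [← Rat.mul_den_eq_num x]
    linear_combination -(x.den : ℚ) ^ 6 * h
  obtain ⟨T, hT⟩ := Rat.isSquare_intCast_iff.1 hsq
  exact sq_ne_five_mul_mul_pow_five_sub (Int.natCast_pos.2 x.den_pos)
    x.isCoprime_num_den (by rw [hT, sq])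

theorem no_rational_points_case8 (X Y : ℚ) : Y ^ 2 ≠ 3 ^ 3 * 5 * X ^ 5 - 5 := by
  intro h
  exact sq_ne_five_mul_pow_five_sub_fortyFive (3 * X) (3 * Y) (by linear_combination 9 * h)
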